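/- For every complex s with Re(s) > 1, ∑'_{(m,k)} [ 1/(m² + mk + 4k²)^s − 1/(2m² + mk + 2k²)^s ] = 2·L(χ_{-3}, s)·L(χ_5, s). -/

import Mathlib

/-- The quadratic Dirichlet character modulo 3:
`χ₋₃(n) = 1` if `n ≡ 1 (mod 3)`, `-1` if `n ≡ 2 (mod 3)`, `0` if `3 ∣ n`. -/
def chiNeg3 (n : ℕ) : ℤ :=
  if n % 3 = 1 then 1 else if n % 3 = 2 then -1 else 0

/-- The quadratic Dirichlet character modulo 5 given by the Legendre symbol `(n/5)`. -/
def chi5 (n : ℕ) : ℤ :=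
  if n % 5 = 1 ∨ n % 5 = 4 then 1 else if n % 5 = 2 ∨ n % 5 = 3 then -1 else 0

/-- The quadratic Dirichlet character modulo 15, `χ₋₁₅(n) = (n/3)·(n/5)`. -/
def chiNeg15 (n : ℕ) : ℤ := chiNeg3 n * chi5 n

/-- The Dirichlet `L`-series `L(χ, s) = ∑_{n ≥ 1} χ(n) n^{-s}`. -/
noncomputable def LSer (χ : ℕ → ℤ) (s : ℂ) : ℂ :=
  ∑' n : ℕ, (χ (n + 1) : ℂ) / ((n : ℂ) + 1) ^ s

/-!
Let `Q₊ = x² + x y + 4 y²` and `Q₋ = 2 x² + x y + 2 y²` be the reduced forms of discriminant `-15`;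
each is alone in its genus. If `p` is a prime, a solution `v` of `Q v = p n` lies modulo `p` on an
isotropic line of `Q`, and on the sublattice attached to such a line `Q` is `p` times another form
of discriminant `-15`, a neighbor of `Q`. Counting solutions line by line therefore expresses the
number `r_Q(p n)` of representations in terms of `r_Q(n / p)` and the numbers of representations of
`n` by the neighbors of `Q`. There are `1 + χ₋₁₅(p)` lines, and the genus characters `χ₋₃` and `χ₅`
decide to which of the two classes the neighbors belong. It follows that `r_{Q₊} - r_{Q₋}` satisfies
the same Hecke recursion as the Dirichlet convolution of `χ₋₃` and `χ₅`. So the former is twice the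
latter, `2` being its value at `1`, and the identity of Dirichlet series follows.
-/

open LSeries LSeries.notation
open scoped Finset

section Convolution

variable {M R : Type*} [AddCommMonoid M] [CommRing R]

theorem sum_divisorsAntidiagonal_prime_mul_dvd {p : ℕ} (hp : p.Prime) (n : ℕ) (F : ℕ → ℕ → M) :
    ∑ x ∈ (p * n).divisorsAntidiagonal with p ∣ x.1, F x.1 x.2 =
      ∑ x ∈ n.divisorsAntidiagonal, F (p * x.1) x.2 := by
  symm
  refine Finset.sum_bij (fun x _ ↦ (p * x.1, x.2)) ?_ ?_ ?_ fun _ _ ↦ rfl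
  · rintro ⟨d, e⟩ h
    simp_all [hp.ne_zero, mul_assoc]
  · rintro ⟨d, e⟩ _ ⟨d', e'⟩ _ h
    simpa [hp.ne_zero] using h
  · rintro ⟨_, e⟩ h
    simp only [Finset.mem_filter, Nat.mem_divisorsAntidiagonal] at h
    obtain ⟨⟨hde, hn⟩, d, rfl⟩ := h
    refine ⟨(d, e), ?_, rfl⟩
    exact Nat.mem_divisorsAntidiagonal.2
      ⟨Nat.eq_of_mul_eq_mul_left hp.pos (by rw [← mul_assoc, hde]), right_ne_zero_of_mul hn⟩

theorem sum_divisorsAntidiagonal_prime_mul_not_dvd {p : ℕ} (hp : p.Prime) (n : ℕ)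
    (F : ℕ → ℕ → M) :
    ∑ x ∈ (p * n).divisorsAntidiagonal with ¬p ∣ x.1, F x.1 x.2 =
      ∑ x ∈ n.divisorsAntidiagonal with ¬p ∣ x.1, F x.1 (p * x.2) := by
  symm
  refine Finset.sum_bij (fun x _ ↦ (x.1, p * x.2)) ?_ ?_ ?_ fun _ _ ↦ rfl
  · rintro ⟨d, e⟩ h
    simp_all [hp.ne_zero, mul_left_comm]
  · rintro ⟨d, e⟩ _ ⟨d', e'⟩ _ h
    simpa [hp.ne_zero] using h
  · rintro ⟨d, e⟩ h
    simp only [Finset.mem_filter, Nat.mem_divisorsAntidiagonal] at h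
    obtain ⟨⟨hde, hn⟩, hd⟩ := h
    obtain ⟨e, rfl⟩ := (hp.dvd_mul.1 (Dvd.intro _ hde.symm)).resolve_left hd
    refine ⟨(d, e), Finset.mem_filter.2 ⟨Nat.mem_divisorsAntidiagonal.2 ⟨?_, ?_⟩, hd⟩, rfl⟩
    · exact Nat.eq_of_mul_eq_mul_left hp.pos (by rw [← hde, mul_left_comm])
    · exact right_ne_zero_of_mul hn

/-- The recursion `f (p n) = A p * f n - B p * f (n / p)` along the primes `p`, as satisfied by the
coefficients of an eigenform of all Hecke operators. The convention `f (n / p) = 0` for `p ∤ n`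
has to be spelled out because `n / p` is truncated division. -/
def SatisfiesHeckeRecursion (A B f : ℕ → R) : Prop :=
  ∀ ⦃p n : ℕ⦄, p.Prime → n ≠ 0 →
    f (p * n) = A p * f n - B p * if p ∣ n then f (n / p) else 0

theorem SatisfiesHeckeRecursion.eq_mul {A B f g : ℕ → R} (hf : SatisfiesHeckeRecursion A B f)
    (hg : SatisfiesHeckeRecursion A B g) (hg₁ : g 1 = 1) {n : ℕ} (hn : n ≠ 0) :
    f n = f 1 * g n := by
  induction n using Nat.strong_induction_on with
  | _ n ih =>
    obtain rfl | hn₁ := eq_or_ne n 1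
    · rw [hg₁, mul_one]
    obtain ⟨p, hp, m, rfl⟩ := Nat.exists_prime_and_dvd hn₁
    have hm : m ≠ 0 := right_ne_zero_of_mul hn
    have hlt : m < p * m := lt_mul_of_one_lt_left (Nat.pos_of_ne_zero hm) hp.one_lt
    rw [hf hp hm, hg hp hm, ih m hlt hm]
    split_ifs with hpm
    · have hdiv : m / p ≠ 0 := (Nat.div_pos (Nat.le_of_dvd (by lia) hpm) hp.pos).ne'
      rw [ih (m / p) ((Nat.div_le_self m p).trans_lt hlt) hdiv]
      ring
    · ring

theorem satisfiesHeckeRecursion_convolution {f g : ℕ → R}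
    (hf : ∀ m n, f (m * n) = f m * f n) (hg : ∀ m n, g (m * n) = g m * g n) :
    SatisfiesHeckeRecursion (f + g) (f * g) (f ⍟ g) := by
  intro p n hp _
  have hdvd (m : ℕ) : ∑ x ∈ (p * m).divisorsAntidiagonal with p ∣ x.1, f x.1 * g x.2 =
      f p * (f ⍟ g) m := by
    simp_rw [sum_divisorsAntidiagonal_prime_mul_dvd hp m (f · * g ·), hf, mul_assoc,
      ← Finset.mul_sum, convolution_def]
  have hnot : ∑ x ∈ (p * n).divisorsAntidiagonal with ¬p ∣ x.1, f x.1 * g x.2 =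
      g p * ∑ x ∈ n.divisorsAntidiagonal with ¬p ∣ x.1, f x.1 * g x.2 := by
    simp_rw [sum_divisorsAntidiagonal_prime_mul_not_dvd hp n (f · * g ·), hg,
      mul_left_comm (f _), ← Finset.mul_sum]
  have hsplit (m : ℕ) : (∑ x ∈ m.divisorsAntidiagonal with p ∣ x.1, f x.1 * g x.2) +
      ∑ x ∈ m.divisorsAntidiagonal with ¬p ∣ x.1, f x.1 * g x.2 = (f ⍟ g) m := by
    rw [convolution_def, Finset.sum_filter_add_sum_filter_not]
  have hlow : ∑ x ∈ n.divisorsAntidiagonal with p ∣ x.1, f x.1 * g x.2 =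
      f p * if p ∣ n then (f ⍟ g) (n / p) else 0 := by
    split_ifs with hpn
    · rw [← hdvd, Nat.mul_div_cancel' hpn]
    · rw [mul_zero, Finset.sum_eq_zero]
      rintro x hx
      rw [Finset.mem_filter, Nat.mem_divisorsAntidiagonal] at hx
      exact absurd (hx.2.trans (Dvd.intro _ hx.1.1)) hpn
  rw [← hsplit (p * n), hdvd, hnot, Pi.add_apply, Pi.mul_apply]
  linear_combination g p * hsplit n - g p * hlow

end Convolution

section BinaryForms

variable {M : Type*} [AddCommGroup M]

/-- The number of representations of the integer `n` by the integral quadratic form `Q`, as a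
cardinality with value `0` when there are infinitely many. -/
noncomputable def repNum (Q : QuadraticForm ℤ M) (n : ℤ) : ℕ := {v | Q v = n}.ncard

theorem repNum_congr {Q Q' : QuadraticForm ℤ M} (h : Q.Equivalent Q') (n : ℤ) :
    repNum Q n = repNum Q' n := by
  obtain ⟨e⟩ := h
  have hpre : {v | Q v = n} = e.toLinearEquiv ⁻¹' {v | Q' v = n} := by
    ext v
    exact iff_of_eq (congrArg (· = n) (e.map_app v).symm)
  rw [repNum, repNum, hpre, Set.ncard_preimage_of_injective_subset_range
    e.toLinearEquiv.injective fun v _ ↦ e.toLinearEquiv.surjective v]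

theorem repNum_smul (Q : QuadraticForm ℤ M) {p : ℕ} (hp : p ≠ 0) (n : ℕ) :
    repNum ((p : ℤ) • Q) n = if p ∣ n then repNum Q (n / p : ℕ) else 0 := by
  simp only [repNum, smul_apply, smul_eq_mul]
  split_ifs with h
  · obtain ⟨m, rfl⟩ := h
    simp [hp]
  · have hempty : {v | (p : ℤ) * Q v = n} = ∅ :=
      Set.eq_empty_of_forall_notMem fun v hv ↦ h (Int.natCast_dvd_natCast.1 ⟨Q v, hv.symm⟩)
    rw [hempty, Set.ncard_empty]

/-- The binary quadratic form `a x² + b x y + c y²`. -/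
def binForm (a b c : ℤ) : QuadraticForm ℤ (ℤ × ℤ) :=
  let x := LinearMap.fst ℤ ℤ ℤ
  let y := LinearMap.snd ℤ ℤ ℤ
  a • QuadraticMap.linMulLin x x + b • QuadraticMap.linMulLin x y + c • QuadraticMap.linMulLin y y

theorem binForm_apply (a b c : ℤ) (v : ℤ × ℤ) :
    binForm a b c v = a * v.1 ^ 2 + b * v.1 * v.2 + c * v.2 ^ 2 := by
  simp only [binForm, add_apply, smul_apply,
    QuadraticMap.linMulLin_apply, LinearMap.fst_apply, LinearMap.snd_apply, smul_eq_mul]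
  ring

theorem binForm_equivalent_swap (a b c : ℤ) : (binForm a b c).Equivalent (binForm c b a) :=
  ⟨{ LinearEquiv.prodComm ℤ ℤ ℤ with
    map_app' := fun v ↦ by
      change binForm c b a (v.2, v.1) = binForm a b c v
      simp only [binForm_apply]
      ring }⟩

theorem binForm_equivalent_neg (a b c : ℤ) : (binForm a b c).Equivalent (binForm a (-b) c) :=
  ⟨{ LinearEquiv.prodCongr (.refl ℤ ℤ) (.neg ℤ) with
    map_app' := fun v ↦ by simp [binForm_apply] }⟩

theorem binForm_equivalent_translate (a b c k : ℤ) :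
    (binForm a b c).Equivalent (binForm a (b + 2 * a * k) (a * k ^ 2 + b * k + c)) :=
  ⟨{ toFun := fun v ↦ (v.1 - k * v.2, v.2)
     invFun := fun v ↦ (v.1 + k * v.2, v.2)
     map_add' := fun v w ↦ by ext <;> simp; ring
     map_smul' := fun r v ↦ by ext <;> simp; ring
     left_inv := fun v ↦ by simp
     right_inv := fun v ↦ by simp
     map_app' := fun v ↦ by
      simp only [binForm_apply]
      ring }⟩

theorem exists_equivalent_binForm_reduced {a : ℤ} (b c : ℤ) (ha : 0 < a) (hd : discrim a b c < 0) :
    ∃ a' b' c' : ℤ, (binForm a b c).Equivalent (binForm a' b' c') ∧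
      discrim a' b' c' = discrim a b c ∧ 0 < a' ∧ |b'| ≤ a' ∧ a' ≤ c' := by
  induction hN : a.toNat using Nat.strong_induction_on generalizing a b c with
  | _ N ih =>
    set k := -((b + a) / (2 * a))
    set b' := b + 2 * a * k with hb'
    set c' := a * k ^ 2 + b * k + c with hc'
    have htranslate : (binForm a b c).Equivalent (binForm a b' c') :=
      binForm_equivalent_translate a b c k
    have hdisc : discrim a b' c' = discrim a b c := by
      simp only [discrim, hb', hc']
      ring
    have hb : |b'| ≤ a := by
      have hrem : b' + a = (b + a) % (2 * a) := by
        rw [Int.emod_def]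
        lia
      have := Int.emod_nonneg (b + a) (b := 2 * a) (by lia)
      have := Int.emod_lt_of_pos (b + a) (b := 2 * a) (by lia)
      exact abs_le.2 ⟨by lia, by lia⟩
    obtain hac | hca := le_or_gt a c'
    · exact ⟨a, b', c', htranslate, hdisc, ha, hb, hac⟩
    have hc : 0 < c' := by
      rw [← hdisc, discrim] at hd
      nlinarith [sq_nonneg b']
    have hswap : discrim c' b' a = discrim a b c := by
      rw [← hdisc, discrim, discrim]
      ring
    obtain ⟨a₁, b₁, c₁, he, hd₁, hred⟩ := ih c'.toNat (by lia) b' a hc (hswap ▸ hd) rfl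
    exact ⟨a₁, b₁, c₁, (htranslate.trans (binForm_equivalent_swap a b' c')).trans he,
      hd₁.trans hswap, hred⟩

theorem binForm_equivalent_of_discrim_eq_neg_fifteen {a b c : ℤ} (ha : 0 < a)
    (hd : discrim a b c = -15) :
    (binForm a b c).Equivalent (binForm 1 1 4) ∨ (binForm a b c).Equivalent (binForm 2 1 2) := by
  obtain ⟨a, b, c, he, hd', ha, hba, hac⟩ :=
    exists_equivalent_binForm_reduced b c ha (by lia)
  rw [hd, discrim] at hd'
  have hb : b ^ 2 ≤ a ^ 2 := sq_le_sq' (abs_le.1 hba).1 (abs_le.1 hba).2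
  have ha₂ : a ≤ 2 := by nlinarith
  obtain ⟨hb₁, hb₂⟩ := abs_le.1 hba
  have hcases : a = 1 ∧ (b = 1 ∨ b = -1) ∧ c = 4 ∨ a = 2 ∧ (b = 1 ∨ b = -1) ∧ c = 2 := by
    interval_cases a <;> interval_cases b <;> lia
  obtain ⟨rfl, rfl | rfl, rfl⟩ | ⟨rfl, rfl | rfl, rfl⟩ := hcases
  · exact .inl he
  · exact .inl (he.trans (binForm_equivalent_neg 1 (-1) 4))
  · exact .inr he
  · exact .inr (he.trans (binForm_equivalent_neg 2 (-1) 2))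

theorem neg_discrim_mul_sq_fst_le (a b c : ℤ) (v : ℤ × ℤ) :
    -discrim a b c * v.1 ^ 2 ≤ 4 * c * binForm a b c v := by
  rw [binForm_apply, discrim]
  linarith [sq_nonneg (2 * c * v.2 + b * v.1)]

theorem neg_discrim_mul_sq_snd_le (a b c : ℤ) (v : ℤ × ℤ) :
    -discrim a b c * v.2 ^ 2 ≤ 4 * a * binForm a b c v := by
  rw [binForm_apply, discrim]
  linarith [sq_nonneg (2 * a * v.1 + b * v.2)]

end BinaryForms

section IndexP

variable (a b c : ℤ) (p : ℕ) [Fact p.Prime]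

/-- The roots modulo `p` of `a X² + b X + c`. They are the isotropic lines of the reduction of
`binForm a b c` modulo `p`, apart from the line `y = 0`, which is not isotropic when `p ∤ a`. -/
def rootsMod : Finset (ZMod p) := {t | a * t ^ 2 + b * t + c = 0}

/-- For a root `t` of `a X² + b X + c` modulo `p`, the form `Q` such that the restriction of
`binForm a b c` to the lattice `x ≡ t y (mod p)` is `p Q`; the lattice has the basis
`(p, 0), (t, 1)`, where `t` is lifted to `{0, …, p - 1}`. -/
def neighbor (t : ZMod p) : QuadraticForm ℤ (ℤ × ℤ) :=
  binForm (a * p) (2 * a * t.val + b) (binForm a b c (t.val, 1) / p)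

variable {a b c p}

theorem dvd_binForm_of_mem_rootsMod {t : ZMod p} (ht : t ∈ rootsMod a b c p) :
    (p : ℤ) ∣ binForm a b c (t.val, 1) := by
  rw [← ZMod.intCast_zmod_eq_zero_iff_dvd, binForm_apply]
  simpa [rootsMod] using ht

theorem discrim_neighbor {t : ZMod p} (ht : t ∈ rootsMod a b c p) :
    discrim (a * p) (2 * a * t.val + b) (binForm a b c (t.val, 1) / p) = discrim a b c := by
  have h := Int.mul_ediv_cancel' (dvd_binForm_of_mem_rootsMod ht)
  rw [binForm_apply] at h ⊢
  simp only [discrim]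
  linear_combination (-4 * a) * h

theorem binForm_eq_mul_neighbor {t : ZMod p} (ht : t ∈ rootsMod a b c p) (v : ℤ × ℤ) :
    binForm a b c (p * v.1 + t.val * v.2, v.2) = p * neighbor a b c p t v := by
  obtain ⟨q, hq⟩ := dvd_binForm_of_mem_rootsMod ht
  have hp : (p : ℤ) ≠ 0 := mod_cast (Fact.out : p.Prime).ne_zero
  rw [neighbor, hq, Int.mul_ediv_cancel_left q hp]
  simp only [binForm_apply] at hq ⊢
  linear_combination v.2 ^ 2 * hq

theorem ncard_inter_range {Q Q' : QuadraticForm ℤ (ℤ × ℤ)} {m : ℤ} (hm : m ≠ 0)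
    {f : ℤ × ℤ → ℤ × ℤ} (hf : f.Injective) (h : ∀ v, Q (f v) = m * Q' v) (n : ℤ) :
    ({v | Q v = m * n} ∩ Set.range f).ncard = repNum Q' n := by
  rw [← Set.image_preimage_eq_inter_range, Set.ncard_image_of_injective _ hf, repNum]
  simp [h, hm]

theorem ncard_line_eq_repNum_neighbor {t : ZMod p} (ht : t ∈ rootsMod a b c p) (n : ℤ) :
    {v | binForm a b c v = p * n ∧ (v.1 : ZMod p) = t * v.2}.ncard =
      repNum (neighbor a b c p t) n := by
  have hp : (p : ℤ) ≠ 0 := mod_cast (Fact.out : p.Prime).ne_zero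
  let f (v : ℤ × ℤ) : ℤ × ℤ := (p * v.1 + t.val * v.2, v.2)
  have hf : f.Injective := by
    rintro ⟨x, y⟩ ⟨x', y'⟩ h
    simp only [f, Prod.mk.injEq] at h
    obtain ⟨hx, rfl⟩ := h
    simpa [(Fact.out : p.Prime).ne_zero] using hx
  have hrange : Set.range f = {v | (v.1 : ZMod p) = t * v.2} := by
    ext ⟨x, y⟩
    have hdvd : (x : ZMod p) = t * y ↔ (p : ℤ) ∣ x - t.val * y := by
      rw [← ZMod.intCast_zmod_eq_zero_iff_dvd, ← sub_eq_zero]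
      simp
    simp only [f, Set.mem_range, Prod.mk.injEq, Prod.exists, Set.mem_ofPred_eq, hdvd]
    constructor
    · rintro ⟨u, y, rfl, rfl⟩
      exact ⟨u, by ring⟩
    · rintro ⟨u, hu⟩
      exact ⟨u, y, by rw [← hu]; ring, rfl⟩
  rw [← ncard_inter_range hp hf (binForm_eq_mul_neighbor ht), hrange]
  rfl

theorem ncard_zero_eq_repNum_smul (n : ℤ) :
    {v | binForm a b c v = p * n ∧ (v.1 : ZMod p) = 0 ∧ (v.2 : ZMod p) = 0}.ncard =
      repNum ((p : ℤ) • binForm a b c) n := by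
  have hp : (p : ℤ) ≠ 0 := mod_cast (Fact.out : p.Prime).ne_zero
  have hrange : Set.range ((p : ℤ) • · : ℤ × ℤ → ℤ × ℤ) =
      {v | (v.1 : ZMod p) = 0 ∧ (v.2 : ZMod p) = 0} := by
    ext ⟨x, y⟩
    simp only [Set.mem_range, Prod.exists, Prod.smul_mk, smul_eq_mul, Prod.mk.injEq,
      Set.mem_ofPred_eq, ZMod.intCast_zmod_eq_zero_iff_dvd]
    exact ⟨fun ⟨u, w, hu, hw⟩ ↦ ⟨⟨u, hu.symm⟩, ⟨w, hw.symm⟩⟩,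
      fun ⟨⟨u, hu⟩, ⟨w, hw⟩⟩ ↦ ⟨u, w, hu.symm, hw.symm⟩⟩
  rw [← ncard_inter_range hp (smul_right_injective _ hp) (Q := binForm a b c), hrange]
  · rfl
  · intro v
    rw [QuadraticMap.map_smul, smul_apply, smul_eq_mul, smul_eq_mul, mul_assoc]

-- A nonzero isotropic vector modulo `p` lies on exactly one isotropic line, the zero vector on all.
theorem card_rootsMod_filter_add {x y : ZMod p} (ha : (a : ZMod p) ≠ 0)
    (h : a * x ^ 2 + b * x * y + c * y ^ 2 = 0) :
    #{t ∈ rootsMod a b c p | x = t * y} + (if x = 0 ∧ y = 0 then 1 else 0) =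
      1 + #(rootsMod a b c p) * if x = 0 ∧ y = 0 then 1 else 0 := by
  obtain rfl | hy := eq_or_ne y 0
  · obtain rfl : x = 0 := by simpa [ha] using h
    simp [add_comm]
  · have hline : {t ∈ rootsMod a b c p | x = t * y} = {x / y} := by
      ext t
      simp only [Finset.mem_filter, Finset.mem_singleton, eq_div_iff hy, eq_comm (a := x)]
      refine ⟨And.right, fun ht ↦ ⟨?_, ht⟩⟩
      subst ht
      have : (a * t ^ 2 + b * t + c) * y ^ 2 = 0 := by linear_combination h
      simpa [rootsMod, hy] using this
    simp [hline, hy]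

theorem repNum_mul_add_card_mul_repNum (ha : ¬(p : ℤ) ∣ a) {n : ℤ}
    (hfin : {v | binForm a b c v = p * n}.Finite) :
    repNum (binForm a b c) (p * n) + #(rootsMod a b c p) * repNum ((p : ℤ) • binForm a b c) n =
      ∑ t ∈ rootsMod a b c p, repNum (neighbor a b c p t) n +
        repNum ((p : ℤ) • binForm a b c) n := by
  have hcard (P : ℤ × ℤ → Prop) [DecidablePred P] :
      {v | binForm a b c v = p * n ∧ P v}.ncard = #{v ∈ hfin.toFinset | P v} := by
    rw [← Set.ncard_coe_finset]
    simp
  have hrep : repNum (binForm a b c) (p * n) = #hfin.toFinset :=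
    Set.ncard_eq_toFinset_card _ hfin
  rw [hrep, ← ncard_zero_eq_repNum_smul, hcard]
  simp_rw +contextual [← Finset.sum_congr rfl fun _ ht ↦ ncard_line_eq_repNum_neighbor ht n, hcard]
  simp_rw [Finset.card_filter]
  rw [Finset.sum_comm, Finset.card_eq_sum_ones, Finset.mul_sum, ← Finset.sum_add_distrib,
    ← Finset.sum_add_distrib]
  refine Finset.sum_congr rfl fun v hv ↦ ?_
  rw [← Finset.card_filter]
  refine (card_rootsMod_filter_add ?_ ?_).symm
  · rwa [Ne, ZMod.intCast_zmod_eq_zero_iff_dvd]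
  · have hv : binForm a b c v = p * n := by simpa using hv
    rw [binForm_apply] at hv
    simpa using congrArg (Int.cast : ℤ → ZMod p) hv

theorem card_rootsMod_eq_legendreSym_add_one (ha : ¬(p : ℤ) ∣ a) (hp : p ≠ 2) :
    (#(rootsMod a b c p) : ℤ) = legendreSym p (discrim a b c) + 1 := by
  have ha' : (a : ZMod p) ≠ 0 := by rwa [Ne, ZMod.intCast_zmod_eq_zero_iff_dvd]
  have h2 : (2 : ZMod p) ≠ 0 := Ring.two_ne_zero (by rwa [ZMod.ringChar_zmod_n])
  have : NeZero (2 : ZMod p) := ⟨h2⟩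
  rw [← legendreSym.card_sqrts p hp]
  congr 1
  refine Finset.card_bijective (fun t : ZMod p ↦ 2 * a * t + b) ?_ fun t ↦ ?_
  · exact ((Equiv.mulLeft₀ (2 * (a : ZMod p)) (mul_ne_zero h2 ha')).trans
      (Equiv.addRight (b : ZMod p))).bijective
  · rw [rootsMod, Finset.mem_filter_univ, Set.mem_toFinset, Set.mem_ofPred_eq, pow_two t,
      quadratic_eq_zero_iff_discrim_eq_sq ha', eq_comm]
    simp [discrim]

theorem card_rootsMod_two (ha : ¬2 ∣ a) (hd : discrim a b c % 8 = 1) :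
    #(rootsMod a b c 2) = 2 := by
  have hodd : b % 2 = 1 := by
    rw [discrim, mul_assoc] at hd
    exact Int.odd_iff.1 ((Int.odd_pow' two_ne_zero).1 (Int.odd_iff.2 (by lia)))
  obtain ⟨l, hl⟩ := Int.eight_dvd_sq_sub_one_of_odd (Int.odd_iff.2 hodd)
  have heven : 2 ∣ a * c := by
    rw [discrim, mul_assoc] at hd
    lia
  have hc : c % 2 = 0 := Int.emod_eq_zero_of_dvd ((Int.prime_two.dvd_or_dvd heven).resolve_left ha)
  have ha₂ : (a : ZMod 2) = 1 := (ZMod.intCast_eq_intCast_iff' a 1 2).2 (by lia)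
  have hb₂ : (b : ZMod 2) = 1 := (ZMod.intCast_eq_intCast_iff' b 1 2).2 hodd
  have hc₂ : (c : ZMod 2) = 0 := (ZMod.intCast_eq_intCast_iff' c 0 2).2 hc
  simp only [rootsMod, ha₂, hb₂, hc₂]
  decide

end IndexP

section Characters

instance fact_prime_five : Fact (Nat.Prime 5) := ⟨Nat.prime_five⟩

theorem chiNeg3_eq_legendreSym (n : ℕ) : chiNeg3 n = legendreSym 3 n := by
  have hperiodic : ∀ r < 3, chiNeg3 r = legendreSym 3 r := by decide
  rw [legendreSym.mod, ← Int.natCast_mod, ← hperiodic _ (n.mod_lt three_pos)]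
  simp only [chiNeg3, Nat.mod_mod]

theorem chi5_eq_legendreSym (n : ℕ) : chi5 n = legendreSym 5 n := by
  have hperiodic : ∀ r < 5, chi5 r = legendreSym 5 r := by decide
  rw [legendreSym.mod, ← Int.natCast_mod, ← hperiodic _ (n.mod_lt (by norm_num))]
  simp only [chi5, Nat.mod_mod]

theorem chiNeg3_mul (m n : ℕ) : chiNeg3 (m * n) = chiNeg3 m * chiNeg3 n := by
  simp only [chiNeg3_eq_legendreSym, Nat.cast_mul, legendreSym.mul]

theorem chi5_mul (m n : ℕ) : chi5 (m * n) = chi5 m * chi5 n := by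
  simp only [chi5_eq_legendreSym, Nat.cast_mul, legendreSym.mul]

theorem legendreSym_neg_fifteen (p : ℕ) [Fact p.Prime] (hp : p ≠ 2) :
    legendreSym p (-15) = chiNeg15 p := by
  have h₃ : legendreSym p (-1) * legendreSym p 3 = legendreSym 3 p := by
    have hrec : legendreSym p 3 = (-1) ^ (p / 2) * legendreSym 3 p := by
      simpa using legendreSym.quadratic_reciprocity' (p := 3) (q := p) (by norm_num) hp
    have hodd : p % 2 = 1 := (Fact.out : p.Prime).eq_two_or_odd.resolve_left hp
    rw [hrec, legendreSym.at_neg_one hp, ZMod.χ₄_eq_neg_one_pow hodd, ← mul_assoc, ← mul_pow,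
      neg_one_mul, neg_neg, one_pow, one_mul]
  have h₅ : legendreSym p 5 = legendreSym 5 p :=
    (legendreSym.quadratic_reciprocity_one_mod_four (p := 5) (q := p) (by norm_num) hp)
  rw [chiNeg15, chiNeg3_eq_legendreSym, chi5_eq_legendreSym, ← h₃, ← h₅, ← legendreSym.mul,
    ← legendreSym.mul]
  norm_num

end Characters

section Genus

theorem card_rootsMod_of_discrim_eq_neg_fifteen {a b c : ℤ} {p : ℕ} [Fact p.Prime]
    (ha : ¬(p : ℤ) ∣ a) (hd : discrim a b c = -15) :
    (#(rootsMod a b c p) : ℤ) = 1 + chiNeg15 p := by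
  obtain rfl | hp := eq_or_ne p 2
  · rw [card_rootsMod_two ha (by lia)]
    rfl
  · rw [card_rootsMod_eq_legendreSym_add_one ha hp, hd, legendreSym_neg_fifteen p hp, add_comm]

theorem legendreSym_mul_binForm {a b c : ℤ} {q : ℕ} [Fact q.Prime] (hq : q ≠ 2)
    (hd : (q : ℤ) ∣ discrim a b c) (v : ℤ × ℤ) :
    legendreSym q a * legendreSym q (binForm a b c v) =
      legendreSym q (2 * a * v.1 + b * v.2) ^ 2 := by
  have h₂ : legendreSym q 2 ^ 2 = 1 :=
    legendreSym.sq_one q (mod_cast Ring.two_ne_zero (by rwa [ZMod.ringChar_zmod_n]))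
  have hcongr : 2 ^ 2 * (a * binForm a b c v) ≡ (2 * a * v.1 + b * v.2) ^ 2 [ZMOD q] := by
    refine Int.modEq_iff_dvd.2 (hd.trans ⟨v.2 ^ 2, ?_⟩)
    rw [binForm_apply, discrim]
    ring
  calc legendreSym q a * legendreSym q (binForm a b c v)
      = legendreSym q (2 ^ 2 * (a * binForm a b c v)) := by
        rw [legendreSym.mul, legendreSym.mul, pow_two, legendreSym.mul, ← pow_two, h₂, one_mul]
    _ = legendreSym q ((2 * a * v.1 + b * v.2) ^ 2) := by
        rw [legendreSym.mod, hcongr, ← legendreSym.mod]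
    _ = legendreSym q (2 * a * v.1 + b * v.2) ^ 2 := by
        rw [pow_two, legendreSym.mul, pow_two]

/-- The reduced form of discriminant `-15` on whose nonzero values modulo `3` and `5` both genus
characters `(·/3)` and `(·/5)` are equal to `ε`. -/
def genusRep (ε : ℤˣ) : QuadraticForm ℤ (ℤ × ℤ) :=
  if ε = 1 then binForm 1 1 4 else binForm 2 1 2

theorem genusRep_one : genusRep 1 = binForm 1 1 4 := rfl

theorem genusRep_neg_one : genusRep (-1) = binForm 2 1 2 := rfl

theorem exists_equivalent_genusRep {a b c : ℤ} (ha : 0 < a) (hd : discrim a b c = -15) :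
    ∃ ε : ℤˣ, (binForm a b c).Equivalent (genusRep ε) := by
  obtain h | h := binForm_equivalent_of_discrim_eq_neg_fifteen ha hd
  · exact ⟨1, h⟩
  · exact ⟨-1, genusRep_neg_one ▸ h⟩

theorem exists_genusRep_equivalent_not_dvd (ε : ℤˣ) {p : ℕ} (hp : p.Prime) :
    ∃ a b c : ℤ, discrim a b c = -15 ∧ 0 < a ∧ ¬(p : ℤ) ∣ a ∧
      (binForm a b c).Equivalent (genusRep ε) := by
  obtain rfl | rfl := Int.units_eq_one_or ε
  · refine ⟨1, 1, 4, rfl, one_pos, ?_, .refl _⟩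
    exact mod_cast hp.not_dvd_one
  obtain rfl | hp₂ := eq_or_ne p 2
  · refine ⟨3, 3, 2, rfl, three_pos, by decide, ?_⟩
    exact (binForm_equivalent_translate 3 3 2 (-1)).trans <|
      (binForm_equivalent_swap 3 (-3) 2).trans (binForm_equivalent_translate 2 (-3) 3 1)
  · refine ⟨2, 1, 2, rfl, two_pos, ?_, .refl _⟩
    exact mod_cast (Nat.prime_dvd_prime_iff_eq hp Nat.prime_two).not.2 hp₂

theorem legendreSym_genusRep_fst {q : ℕ} [Fact q.Prime] (h₂ : legendreSym q 2 = -1) (ε : ℤˣ) :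
    legendreSym q (genusRep ε (1, 0)) = ε := by
  obtain rfl | rfl := Int.units_eq_one_or ε
  · simp [genusRep_one, binForm_apply]
  · simp [genusRep_neg_one, binForm_apply, h₂]

theorem legendreSym_genusRep {q : ℕ} [Fact q.Prime] (hq : (q : ℤ) ∣ -15)
    (h₂ : legendreSym q 2 = -1) {ε : ℤˣ} {v : ℤ × ℤ} (hv : legendreSym q (genusRep ε v) ≠ 0) :
    legendreSym q (genusRep ε v) = ε := by
  have hq₂ : q ≠ 2 := by
    rintro rfl
    exact absurd hq (by decide)
  have hsq : ∃ z, ε * legendreSym q (genusRep ε v) = legendreSym q z ^ 2 := by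
    obtain rfl | rfl := Int.units_eq_one_or ε
    · have := legendreSym_mul_binForm (a := 1) (b := 1) (c := 4) hq₂ hq v
      exact ⟨_, by simpa [genusRep_one] using this⟩
    · have := legendreSym_mul_binForm (a := 2) (b := 1) (c := 2) hq₂ hq v
      exact ⟨_, by simpa [genusRep_neg_one, h₂] using this⟩
  obtain ⟨z, hz⟩ := hsq
  have hε : (ε : ℤ) * ε = 1 := Int.units_coe_mul_self ε
  have hz₀ : (z : ZMod q) ≠ 0 := by
    intro h
    rw [(legendreSym.eq_zero_iff q z).2 h] at hz
    simp [hv] at hz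
  rw [legendreSym.sq_one q hz₀] at hz
  linear_combination ε * hz - legendreSym q (genusRep ε v) * hε

theorem legendreSym_eq_mul_of_mul_genusRep_eq {q : ℕ} [Fact q.Prime] (hq : (q : ℤ) ∣ -15)
    (h₂ : legendreSym q 2 = -1) {k : ℤ} {ε ε' : ℤˣ} {w : ℤ × ℤ}
    (h : k * genusRep ε' (1, 0) = genusRep ε w) (hk : legendreSym q k ≠ 0) :
    legendreSym q k = ε * ε' := by
  have hL := congrArg (legendreSym q) h
  rw [legendreSym.mul, legendreSym_genusRep_fst h₂] at hL
  have hε' : (ε' : ℤ) * ε' = 1 := Int.units_coe_mul_self ε'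
  rw [legendreSym_genusRep hq h₂ (hL ▸ mul_ne_zero hk ε'.ne_zero)] at hL
  linear_combination ε' * hL - legendreSym q k * hε'

-- Both `χ₋₃ p` and `χ₅ p` equal `ε ε'`, except that one of them vanishes when `p` is `3` or `5`;
-- this is the formula that covers both cases.
theorem one_add_chiNeg15_mul_eq_of_mul_genusRep_eq {p : ℕ} (hp : p.Prime) {ε ε' : ℤˣ} {w : ℤ × ℤ}
    (h : p * genusRep ε' (1, 0) = genusRep ε w) :
    (1 + chiNeg15 p) * ε' = ε * (chiNeg3 p + chi5 p) := by
  have hgenus : chiNeg3 p = ε * ε' ∨ chi5 p = ε * ε' := by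
    rw [chiNeg3_eq_legendreSym, chi5_eq_legendreSym]
    obtain h₃ | h₃ := ne_or_eq (legendreSym 3 p) 0
    · exact .inl (legendreSym_eq_mul_of_mul_genusRep_eq (by decide) (by decide) h h₃)
    · refine .inr (legendreSym_eq_mul_of_mul_genusRep_eq (by decide) (by decide) h ?_)
      rw [legendreSym.eq_zero_iff, Int.cast_natCast, ZMod.natCast_eq_zero_iff,
        Nat.prime_dvd_prime_iff_eq Nat.prime_three hp] at h₃
      subst h₃
      decide
  have hε : (ε : ℤ) * ε = 1 := Int.units_coe_mul_self ε
  have hε' : (ε' : ℤ) * ε' = 1 := Int.units_coe_mul_self ε'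
  rw [chiNeg15]
  obtain h' | h' := hgenus <;> rw [h']
  · linear_combination (ε * chi5 p) * hε' - ε' * hε
  · linear_combination (ε * chiNeg3 p) * hε' - ε' * hε

end Genus

section HeckeRecursion

theorem finite_setOf_binForm_eq {a b c : ℤ} (hd : discrim a b c < 0) (n : ℤ) :
    {v | binForm a b c v = n}.Finite := by
  refine ((Set.finite_Icc (-(4 * c * n)) (4 * c * n)).prod
    (Set.finite_Icc (-(4 * a * n)) (4 * a * n))).subset ?_
  rintro v rfl
  have hx := neg_discrim_mul_sq_fst_le a b c v
  have hy := neg_discrim_mul_sq_snd_le a b c v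
  have hbound {u N : ℤ} (h : -discrim a b c * u ^ 2 ≤ N) : u ∈ Set.Icc (-N) N := by
    have hu : |u| ≤ u ^ 2 := by
      rw [← sq_abs]
      exact Int.le_self_sq |u|
    exact abs_le.1 (by nlinarith [sq_nonneg u])
  exact ⟨hbound hx, hbound hy⟩

/-- The difference of the numbers of representations of `n` by the two classes of forms of
discriminant `-15`, that is, by its two genera. -/
noncomputable def genusDiff (n : ℤ) : ℤ := repNum (genusRep 1) n - repNum (genusRep (-1)) n

theorem two_mul_repNum_genusRep (ε : ℤˣ) (n : ℤ) :
    (2 * repNum (genusRep ε) n : ℤ) =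
      repNum (genusRep 1) n + repNum (genusRep (-1)) n + ε * genusDiff n := by
  obtain rfl | rfl := Int.units_eq_one_or ε
  all_goals
    simp only [genusDiff, Units.val_one, Units.val_neg]
    ring

variable {a b c : ℤ} {p : ℕ} [Fact p.Prime] {ε : ℤˣ}

theorem exists_neighbor_equivalent_genusRep (ha : 0 < a) (hd : discrim a b c = -15)
    (he : (binForm a b c).Equivalent (genusRep ε)) {t : ZMod p} (ht : t ∈ rootsMod a b c p) :
    ∃ ε' : ℤˣ, (neighbor a b c p t).Equivalent (genusRep ε') ∧
      (1 + chiNeg15 p) * ε' = ε * (chiNeg3 p + chi5 p) := by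
  have hp : p.Prime := Fact.out
  obtain ⟨ε', he'⟩ := exists_equivalent_genusRep (mul_pos ha (mod_cast hp.pos))
    ((discrim_neighbor ht).trans hd)
  refine ⟨ε', he', ?_⟩
  obtain ⟨e⟩ := he
  obtain ⟨e'⟩ := he'
  refine one_add_chiNeg15_mul_eq_of_mul_genusRep_eq hp
    (w := e (p * (e'.symm (1, 0)).1 + t.val * (e'.symm (1, 0)).2, (e'.symm (1, 0)).2)) ?_
  rw [e.map_app, binForm_eq_mul_neighbor ht, neighbor, ← e'.symm.map_app]

theorem two_mul_sum_repNum_neighbor (ha : 0 < a) (hd : discrim a b c = -15) (hpa : ¬(p : ℤ) ∣ a)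
    (he : (binForm a b c).Equivalent (genusRep ε)) (n : ℤ) :
    2 * ∑ t ∈ rootsMod a b c p, (repNum (neighbor a b c p t) n : ℤ) =
      (1 + chiNeg15 p) * (repNum (genusRep 1) n + repNum (genusRep (-1)) n) +
        ε * (chiNeg3 p + chi5 p) * genusDiff n := by
  have hcard := card_rootsMod_of_discrim_eq_neg_fifteen hpa hd
  obtain hempty | ⟨t₀, ht₀⟩ := (rootsMod a b c p).eq_empty_or_nonempty
  · rw [hempty, Finset.card_empty, Nat.cast_zero] at hcard
    have hsum : chiNeg3 p + chi5 p = 0 := by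
      have hprod : chiNeg3 p * chi5 p = -1 := (neg_eq_of_add_eq_zero_right hcard.symm).symm
      obtain ⟨h₃, h₅⟩ | ⟨h₃, h₅⟩ := Int.mul_eq_neg_one_iff_eq_one_or_neg_one.1 hprod <;>
        rw [h₃, h₅] <;> rfl
    rw [hempty, Finset.sum_empty, ← hcard, hsum]
    ring
  have hne : 1 + chiNeg15 p ≠ 0 := by
    rw [← hcard]
    exact mod_cast Finset.card_ne_zero_of_mem ht₀
  have hterm : ∀ t ∈ rootsMod a b c p, (1 + chiNeg15 p) * (2 * repNum (neighbor a b c p t) n : ℤ) =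
      (1 + chiNeg15 p) * (repNum (genusRep 1) n + repNum (genusRep (-1)) n) +
        ε * (chiNeg3 p + chi5 p) * genusDiff n := by
    intro t ht
    obtain ⟨ε', he', hε'⟩ := exists_neighbor_equivalent_genusRep ha hd he ht
    rw [repNum_congr he', two_mul_repNum_genusRep]
    linear_combination genusDiff n * hε'
  refine mul_left_cancel₀ hne ?_
  rw [Finset.mul_sum, Finset.mul_sum, Finset.sum_congr rfl hterm, Finset.sum_const, nsmul_eq_mul,
    hcard]

theorem two_mul_repNum_binForm_prime_mul (ha : 0 < a) (hd : discrim a b c = -15)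
    (hpa : ¬(p : ℤ) ∣ a) (he : (binForm a b c).Equivalent (genusRep ε)) (n : ℤ) :
    (2 * repNum (binForm a b c) (p * n) +
        2 * chiNeg15 p * repNum ((p : ℤ) • binForm a b c) n : ℤ) =
      (1 + chiNeg15 p) * (repNum (genusRep 1) n + repNum (genusRep (-1)) n) +
        ε * (chiNeg3 p + chi5 p) * genusDiff n := by
  have hcount : (repNum (binForm a b c) (p * n) + #(rootsMod a b c p) *
      repNum ((p : ℤ) • binForm a b c) n : ℤ) = ∑ t ∈ rootsMod a b c p,
        (repNum (neighbor a b c p t) n : ℤ) + repNum ((p : ℤ) • binForm a b c) n :=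
    mod_cast repNum_mul_add_card_mul_repNum hpa (finite_setOf_binForm_eq (by lia) (p * n))
  rw [card_rootsMod_of_discrim_eq_neg_fifteen hpa hd] at hcount
  linear_combination 2 * hcount + two_mul_sum_repNum_neighbor ha hd hpa he n

theorem two_mul_repNum_genusRep_prime_mul (ε : ℤˣ) {p : ℕ} (hp : p.Prime) (n : ℕ) :
    (2 * repNum (genusRep ε) (p * n : ℕ) +
        2 * chiNeg15 p * (if p ∣ n then repNum (genusRep ε) (n / p : ℕ) else 0 : ℕ) : ℤ) =
      (1 + chiNeg15 p) * (repNum (genusRep 1) n + repNum (genusRep (-1)) n) +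
        ε * (chiNeg3 p + chi5 p) * genusDiff n := by
  have : Fact p.Prime := ⟨hp⟩
  obtain ⟨a, b, c, hd, ha, hpa, he⟩ := exists_genusRep_equivalent_not_dvd ε hp
  have h := two_mul_repNum_binForm_prime_mul ha hd hpa he n
  rw [repNum_smul _ hp.ne_zero, repNum_congr he, repNum_congr he] at h
  exact mod_cast h

theorem satisfiesHeckeRecursion_genusDiff :
    SatisfiesHeckeRecursion (chiNeg3 + chi5) chiNeg15 fun n : ℕ ↦ genusDiff n := by
  intro p n hp _
  have h₁ := two_mul_repNum_genusRep_prime_mul 1 hp n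
  have h₂ := two_mul_repNum_genusRep_prime_mul (-1) hp n
  simp only [genusDiff, Pi.add_apply, Units.val_one, Units.val_neg] at h₁ h₂ ⊢
  split_ifs at h₁ h₂ ⊢
  all_goals linarith

theorem repNum_genusRep_one_one : repNum (genusRep 1) 1 = 2 := by
  have hset : {v | genusRep 1 v = 1} = {(1, 0), (-1, 0)} := by
    ext ⟨x, y⟩
    simp only [genusRep_one, binForm_apply, Set.mem_ofPred_eq, Set.mem_insert_iff,
      Set.mem_singleton_iff, Prod.mk.injEq]
    refine ⟨fun h ↦ ?_, by rintro (⟨rfl, rfl⟩ | ⟨rfl, rfl⟩) <;> rfl⟩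
    have hy : y = 0 := by
      have : y ^ 2 < 1 := by linarith [sq_nonneg (2 * x + y), sq_nonneg y]
      nlinarith
    subst hy
    simpa using h
  rw [repNum, hset, Set.ncard_pair (by decide)]

theorem repNum_genusRep_neg_one_one : repNum (genusRep (-1)) 1 = 0 := by
  have hempty : {v | genusRep (-1) v = 1} = ∅ := by
    refine Set.eq_empty_of_forall_notMem fun v (hv : genusRep (-1) v = 1) ↦ ?_
    have h := legendreSym_genusRep (q := 3) (ε := -1) (v := v) (by decide) (by decide)
    rw [hv] at h
    exact absurd h (by decide)
  rw [repNum, hempty, Set.ncard_empty]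

theorem genusDiff_eq_two_mul_convolution {n : ℕ} (hn : n ≠ 0) :
    genusDiff n = 2 * (chiNeg3 ⍟ chi5) n := by
  have h₁ : genusDiff (1 : ℕ) = 2 := by
    rw [genusDiff, Nat.cast_one, repNum_genusRep_one_one, repNum_genusRep_neg_one_one]
    rfl
  have hconv : (chiNeg3 ⍟ chi5) 1 = 1 := by
    rw [convolution_def]
    rfl
  rw [← h₁]
  exact satisfiesHeckeRecursion_genusDiff.eq_mul
    (satisfiesHeckeRecursion_convolution chiNeg3_mul chi5_mul) hconv hn

end HeckeRecursion

section Analytic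

variable {a b c : ℤ} {s : ℂ}

theorem posDef_binForm (ha : 0 < a) (hd : discrim a b c < 0) : (binForm a b c).PosDef := by
  rintro ⟨x, y⟩ hv
  obtain rfl | hy := eq_or_ne y 0
  · have hx : x ≠ 0 := by simpa using hv
    have : 0 < a * x ^ 2 := by positivity
    simpa [binForm_apply] using this
  · have hle := neg_discrim_mul_sq_snd_le a b c (x, y)
    have hpos : 0 < -discrim a b c * y ^ 2 := mul_pos (neg_pos.2 hd) (by positivity)
    exact pos_of_mul_pos_right (hpos.trans_le hle) (by lia)

theorem norm_sq_le_mul_binForm (ha : 0 < a) (hd : discrim a b c < 0) (v : ℤ × ℤ) :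
    ‖v‖ ^ 2 ≤ 4 * (a + c) * binForm a b c v := by
  have hc : 0 < c := by
    rw [discrim] at hd
    nlinarith [sq_nonneg b]
  have hQ : 0 ≤ binForm a b c v := (posDef_binForm ha hd).nonneg v
  have hx : v.1 ^ 2 ≤ 4 * (a + c) * binForm a b c v := by
    nlinarith [neg_discrim_mul_sq_fst_le a b c v, sq_nonneg v.1]
  have hy : v.2 ^ 2 ≤ 4 * (a + c) * binForm a b c v := by
    nlinarith [neg_discrim_mul_sq_snd_le a b c v, sq_nonneg v.2]
  rw [Prod.norm_def, Int.norm_eq_abs, Int.norm_eq_abs]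
  obtain h | h := max_choice |(v.1 : ℝ)| |(v.2 : ℝ)| <;> rw [h, sq_abs]
  · exact mod_cast hx
  · exact mod_cast hy

theorem summable_norm_rpow_neg {k : ℝ} (hk : 2 < k) :
    Summable fun v : ℤ × ℤ ↦ ‖v‖ ^ (-k) := by
  rw [← (finTwoArrowEquiv ℤ).summable_iff]
  refine (EisensteinSeries.summable_one_div_norm_rpow hk).congr fun x ↦ ?_
  simp [Prod.norm_def, EisensteinSeries.norm_eq_max_natAbs, Int.norm_eq_abs]

theorem summable_one_div_binForm_cpow (ha : 0 < a) (hd : discrim a b c < 0) (hs : 1 < s.re) :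
    Summable fun v : {v : ℤ × ℤ // v ≠ 0} ↦ 1 / (binForm a b c v : ℂ) ^ s := by
  have hsum := summable_norm_rpow_neg (k := 2 * s.re) (by linarith)
  refine .of_norm_bounded ((hsum.subtype _).mul_left ((4 * (a + c) : ℝ) ^ s.re)) fun ⟨v, hv⟩ ↦ ?_
  have hQ : (0 : ℝ) < binForm a b c v := mod_cast posDef_binForm ha hd v hv
  have hv₀ : 0 < ‖v‖ := norm_pos_iff.2 hv
  have hle := norm_sq_le_mul_binForm ha hd v
  have hK : (0 : ℝ) < 4 * (a + c) := pos_of_mul_pos_left ((pow_pos hv₀ 2).trans_le hle) hQ.le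
  calc ‖1 / (binForm a b c v : ℂ) ^ s‖ = (binForm a b c v : ℝ) ^ (-s.re) := by
        rw [norm_div, norm_one, ← Complex.ofReal_intCast, Complex.norm_cpow_eq_rpow_re_of_pos hQ,
          Real.rpow_neg hQ.le, one_div]
    _ ≤ (‖v‖ ^ 2 / (4 * (a + c))) ^ (-s.re) :=
        Real.rpow_le_rpow_of_nonpos (by positivity) ((div_le_iff₀' hK).2 hle) (by linarith)
    _ = (4 * (a + c)) ^ s.re * ‖v‖ ^ (-(2 * s.re)) := by
        rw [Real.div_rpow (by positivity) hK.le, Real.rpow_neg hK.le, div_inv_eq_mul, mul_comm,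
          ← Real.rpow_two, ← Real.rpow_mul hv₀.le, mul_neg]

theorem LSeriesHasSum_card_fiber {ι : Type*} {f : ι → ℕ} (hf : ∀ i, f i ≠ 0) {z : ℂ}
    (h : HasSum (fun i ↦ 1 / (f i : ℂ) ^ s) z) :
    LSeriesHasSum (fun n ↦ (Nat.card (f ⁻¹' {n}) : ℂ)) s z := by
  refine HasSum.congr_fun (h.tsum_fiberwise f) fun n ↦ ?_
  have hfiber (i : f ⁻¹' {n}) : 1 / (f i : ℂ) ^ s = 1 / (n : ℂ) ^ s := by rw [i.2]
  rw [tsum_congr hfiber, tsum_const, nsmul_eq_mul]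
  obtain rfl | hn := eq_or_ne n 0
  · have : f ⁻¹' {0} = ∅ := Set.eq_empty_of_forall_notMem hf
    simp [this]
  · rw [LSeries.term_of_ne_zero hn, mul_one_div]

theorem LSeriesHasSum_repNum {M : Type*} [AddCommGroup M] {Q : QuadraticForm ℤ M} (hQ : Q.PosDef)
    {z : ℂ} (h : HasSum (fun v : {v : M // v ≠ 0} ↦ 1 / (Q v : ℂ) ^ s) z) :
    LSeriesHasSum (fun n ↦ (repNum Q n : ℂ)) s z := by
  have hcast (v : {v : M // v ≠ 0}) : ((Q v).toNat : ℤ) = Q v := Int.toNat_of_nonneg (hQ v v.2).le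
  have hne (v : {v : M // v ≠ 0}) : (Q v).toNat ≠ 0 := by
    have := hQ v v.2
    lia
  have hcard {n : ℕ} (hn : n ≠ 0) :
      Nat.card ((fun v : {v : M // v ≠ 0} ↦ (Q v).toNat) ⁻¹' {n}) = repNum Q n := by
    rw [Nat.card_coe_set_eq, repNum, ← Set.ncard_image_of_injective _ Subtype.val_injective]
    congr 1
    ext v
    constructor
    · rintro ⟨v, rfl : (Q v).toNat = n, rfl⟩
      exact (hcast v).symm
    · intro (hv : Q v = n)
      have hv₀ : v ≠ 0 := by
        rintro rfl
        exact hn (mod_cast hv.symm.trans (map_zero Q))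
      have htoNat : (Q v).toNat = n := by rw [hv, Int.toNat_natCast]
      exact ⟨⟨v, hv₀⟩, htoNat, rfl⟩
  refine (LSeriesHasSum_congr s z fun hn ↦ congrArg Nat.cast (hcard hn)).1
    (LSeriesHasSum_card_fiber hne ?_)
  simpa only [← Int.cast_natCast (R := ℂ), hcast] using h

theorem LSer_eq_LSeries (χ : ℕ → ℤ) (h : LSeriesSummable (fun n ↦ (χ n : ℂ)) s) :
    LSer χ s = LSeries (fun n ↦ (χ n : ℂ)) s := by
  rw [LSeries, Summable.tsum_eq_zero_add h, LSeries.term_zero, zero_add, LSer]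
  refine tsum_congr fun n ↦ ?_
  rw [LSeries.term_of_ne_zero n.succ_ne_zero, Nat.cast_succ]

theorem LSeriesHasSum_repNum_binForm (ha : 0 < a) (hd : discrim a b c < 0) (hs : 1 < s.re) :
    LSeriesHasSum (fun n ↦ (repNum (binForm a b c) n : ℂ)) s
      (∑' v : {v : ℤ × ℤ // v ≠ 0}, 1 / (binForm a b c v : ℂ) ^ s) :=
  LSeriesHasSum_repNum (posDef_binForm ha hd) (summable_one_div_binForm_cpow ha hd hs).hasSum

theorem LSeries_genusDiff (h₃ : LSeriesSummable (fun n ↦ (chiNeg3 n : ℂ)) s)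
    (h₅ : LSeriesSummable (fun n ↦ (chi5 n : ℂ)) s) :
    LSeries (fun n ↦ (genusDiff n : ℂ)) s = 2 * LSer chiNeg3 s * LSer chi5 s := by
  have hconv {n : ℕ} (hn : n ≠ 0) : (genusDiff n : ℂ) =
      ((2 : ℂ) • ((fun n ↦ (chiNeg3 n : ℂ)) ⍟ fun n ↦ (chi5 n : ℂ))) n := by
    rw [genusDiff_eq_two_mul_convolution hn, convolution_def, Pi.smul_apply, convolution_def]
    push_cast
    rfl
  rw [LSeries_congr hconv, LSeries_smul, LSeries_convolution' h₃ h₅, LSer_eq_LSeries _ h₃,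
    LSer_eq_LSeries _ h₅, mul_assoc]

theorem LSeriesSummable_chiNeg3 (hs : 1 < s.re) : LSeriesSummable (fun n ↦ (chiNeg3 n : ℂ)) s := by
  refine LSeriesSummable_of_bounded_of_one_lt_re (m := 1) (fun n _ ↦ ?_) hs
  rw [chiNeg3]
  split_ifs <;> simp

theorem LSeriesSummable_chi5 (hs : 1 < s.re) : LSeriesSummable (fun n ↦ (chi5 n : ℂ)) s := by
  refine LSeriesSummable_of_bounded_of_one_lt_re (m := 1) (fun n _ ↦ ?_) hs
  rw [chi5]
  split_ifs <;> simp

end Analytic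

/-- Lemma 3.3 (3): for `Re(s) > 1`,
`∑'_{(m,k)≠0} [ (m²+mk+4k²)^{-s} − (2m²+mk+2k²)^{-s} ] = 2 L(χ₋₃, s) L(χ₅, s)`. -/
theorem lattice_sum_diff_eq_two_L3_L5 (s : ℂ) (hs : 1 < s.re) :
    (∑' p : {p : ℤ × ℤ // p ≠ 0},
        (1 / (((p.1.1 : ℂ) ^ 2 + (p.1.1 : ℂ) * (p.1.2 : ℂ) + 4 * (p.1.2 : ℂ) ^ 2) ^ s) -
          1 / ((2 * (p.1.1 : ℂ) ^ 2 + (p.1.1 : ℂ) * (p.1.2 : ℂ) + 2 * (p.1.2 : ℂ) ^ 2) ^ s))) =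
      2 * LSer chiNeg3 s * LSer chi5 s := by
  have hd₁ : discrim (1 : ℤ) 1 4 < 0 := by decide
  have hd₂ : discrim (2 : ℤ) 1 2 < 0 := by decide
  have hL : LSeries (fun n ↦ (genusDiff n : ℂ)) s =
      ∑' v : {v : ℤ × ℤ // v ≠ 0}, 1 / (binForm 1 1 4 v : ℂ) ^ s -
        ∑' v : {v : ℤ × ℤ // v ≠ 0}, 1 / (binForm 2 1 2 v : ℂ) ^ s := by
    rw [← ((LSeriesHasSum_repNum_binForm one_pos hd₁ hs).sub
      (LSeriesHasSum_repNum_binForm two_pos hd₂ hs)).LSeries_eq]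
    simp [genusDiff, genusRep_one, genusRep_neg_one, Pi.sub_def]
  rw [← LSeries_genusDiff (LSeriesSummable_chiNeg3 hs) (LSeriesSummable_chi5 hs), hL,
    ← (summable_one_div_binForm_cpow one_pos hd₁ hs).tsum_sub
      (summable_one_div_binForm_cpow two_pos hd₂ hs)]
  simp [binForm_apply]
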